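/- Let k be a positive integer, let G be a finite simple graph, and let I ⊆ V(G). If there exists an I-connected path decomposition P of G of width at most k−1, then there exists an I-connected path decomposition P' of G of width at most width(P) such that P' is S-structured for every bottleneck S of G. -/

import Mathlib

open SimpleGraph

variable {V : Type*}

/-- `N_G(Y)`: the set of vertices outside `Y` having a neighbor in `Y`. -/
def nbhdSet (G : SimpleGraph V) (Y : Set V) : Set V :=
  {v | v ∉ Y ∧ ∃ u ∈ Y, G.Adj u v}

/-- `C` is a connected component of the subgraph of `G` induced by `U`. -/
def IsCompIn (G : SimpleGraph V) (U C : Set V) : Prop :=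
  C.Nonempty ∧ C ⊆ U ∧ (G.induce C).Connected ∧
    ∀ u ∈ C, ∀ v ∈ U, G.Adj u v → v ∈ C

/-- `C` is a connected component of `G - S`. -/
def IsCompOf (G : SimpleGraph V) (S C : Set V) : Prop :=
  IsCompIn G Sᶜ C

/-- `C` is an `S`-branch: a connected component of `G - S` with `N_G(C) = S`. -/
def IsBranch (G : SimpleGraph V) (S C : Set V) : Prop :=
  IsCompOf G S C ∧ nbhdSet G C = S

/-- `S` is a bottleneck (for the width parameter `k`): a nonempty set with
at least `2k+1` `S`-branches. -/
def IsBottleneck (G : SimpleGraph V) (k : ℕ) (S : Set V) : Prop :=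
  S.Nonempty ∧ 2 * k + 1 ≤ {C : Set V | IsBranch G S C}.ncard

/-- `(X 0, …, X (l-1))` is a path decomposition of `G`. -/
def IsPathDecomp (G : SimpleGraph V) (l : ℕ) (X : ℕ → Set V) : Prop :=
  (∀ v, ∃ i < l, v ∈ X i) ∧
  (∀ u v, G.Adj u v → ∃ i < l, u ∈ X i ∧ v ∈ X i) ∧
  (∀ i j m, i ≤ j → j ≤ m → m < l → X i ∩ X m ⊆ X j)

/-- The width of a path decomposition: the maximum bag size minus one. -/
noncomputable def pdWidth (l : ℕ) (X : ℕ → Set V) : ℕ :=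
  ((Finset.range l).sup fun i => (X i).ncard) - 1

/-- The set of indices of bags meeting the vertex set `C`. -/
def supp (l : ℕ) (X : ℕ → Set V) (C : Set V) : Set ℕ :=
  {t | t < l ∧ (C ∩ X t).Nonempty}

/-- `a(C)`: the first index of a bag meeting `C`. -/
noncomputable def firstIdx (l : ℕ) (X : ℕ → Set V) (C : Set V) : ℕ :=
  sInf (supp l X C)

/-- `b(C)`: the last index of a bag meeting `C`. -/
noncomputable def lastIdx (l : ℕ) (X : ℕ → Set V) (C : Set V) : ℕ :=
  sSup (supp l X C)

/-- `C` is an in-branch of `S` with respect to the decomposition: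
an `S`-branch with `S ⊆ X (a C)` and `S ⊆ X (b C)`. -/
def IsInBranch (G : SimpleGraph V) (l : ℕ) (X : ℕ → Set V) (S C : Set V) : Prop :=
  IsBranch G S C ∧ S ⊆ X (firstIdx l X C) ∧ S ⊆ X (lastIdx l X C)

/-- `α(S)`: the minimum of `a(H)` over in-branches `H` of `S`. -/
noncomputable def botStart (G : SimpleGraph V) (l : ℕ) (X : ℕ → Set V) (S : Set V) : ℕ :=
  sInf {i | ∃ C, IsInBranch G l X S C ∧ i = firstIdx l X C}

/-- `β(S)`: the maximum of `b(H)` over in-branches `H` of `S`. -/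
noncomputable def botEnd (G : SimpleGraph V) (l : ℕ) (X : ℕ → Set V) (S : Set V) : ℕ :=
  sSup {i | ∃ C, IsInBranch G l X S C ∧ i = lastIdx l X C}

/-- The interval `I(S,P) = [α(S), β(S)]` of a bottleneck `S`. -/
noncomputable def botInterval (G : SimpleGraph V) (l : ℕ) (X : ℕ → Set V) (S : Set V) : Set ℕ :=
  Set.Icc (botStart G l X S) (botEnd G l X S)

/-- A pre-branch of `S`. -/
def IsPreBranch (G : SimpleGraph V) (l : ℕ) (X : ℕ → Set V) (S C : Set V) : Prop :=
  IsBranch G S C ∧ ¬ IsInBranch G l X S C ∧ firstIdx l X C < botStart G l X S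

/-- A post-branch of `S`. -/
def IsPostBranch (G : SimpleGraph V) (l : ℕ) (X : ℕ → Set V) (S C : Set V) : Prop :=
  IsBranch G S C ∧ ¬ IsInBranch G l X S C ∧
    botStart G l X S ≤ firstIdx l X C ∧ botEnd G l X S < lastIdx l X C

/-- `C` waits in the interval `[i, j]` of the decomposition. -/
def WaitsIn (X : ℕ → Set V) (C : Set V) (i j : ℕ) : Prop :=
  ∀ t, i ≤ t → t ≤ j → C ∩ X t = C ∩ X i

/-- The decomposition is `S`-structured: every component of `G - S` that is not an
`S`-branch, and every pre- or post-branch of `S`, waits in `I(S,P)`. -/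
def IsStructured (G : SimpleGraph V) (l : ℕ) (X : ℕ → Set V) (S : Set V) : Prop :=
  ∀ C : Set V,
    ((IsCompOf G S C ∧ ¬ IsBranch G S C) ∨ IsPreBranch G l X S C ∨ IsPostBranch G l X S C) →
    WaitsIn X C (botStart G l X S) (botEnd G l X S)

/-- The decomposition is `I`-connected: every connected component of the subgraph
induced by any prefix of bags contains a vertex of `I`. -/
def IsIConn (G : SimpleGraph V) (l : ℕ) (X : ℕ → Set V) (I : Set V) : Prop :=
  ∀ i < l, ∀ C : Set V, IsCompIn G {v | ∃ j ≤ i, v ∈ X j} C → (C ∩ I).Nonempty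

/-!
A path decomposition in which vertices enter one at a time is encoded by the start and finish times
of the vertices. At most `2 * w` branches of `S` meet the bag where the last vertex of `S` enters or
the bag which the first vertex of `S` leaves, so a bottleneck has a branch all of whose vertices are
covered by every vertex of `S`. Let the core of `S` be the union of these branches, and let `h₀` be
the vertex of the core whose entrance bag has the fewest vertices outside the core. Halting
everything else at the start of `h₀` and running the whole core there makes `S` structured, and by
the choice of `h₀` it does not increase the width.

A structured bottleneck `S'` stays structured: the vertices of `S` outside `S'` lie in one component
of `G - S'` and vice versa, so that the cores of `S` and `S'` are nested or disjoint, and as `S'`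
is structured, the start of `h₀` does not fall into the span of a disjoint core of `S'`. Hence
the set of bottlenecks that are not structured shrinks until it is empty.
-/

/-! ### Components and branches -/

section Components

variable {G G' : SimpleGraph V} {S Z U C D K : Set V} {v x s : V}

lemma subset_of_induce_preconnected (hC : (G.induce C).Preconnected) (hne : (C ∩ K).Nonempty)
    (hK : ∀ u ∈ C ∩ K, ∀ v ∈ C, G.Adj u v → v ∈ K) : C ⊆ K := by
  obtain ⟨x, hxC, hxK⟩ := hne
  intro y hy
  by_contra hyK
  obtain ⟨p⟩ := hC ⟨x, hxC⟩ ⟨y, hy⟩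
  obtain ⟨d, -, hd₁, hd₂⟩ := p.exists_boundary_dart (Subtype.val ⁻¹' K) hxK hyK
  exact hd₂ (hK _ ⟨d.fst.2, hd₁⟩ _ d.snd.2 d.adj)

lemma IsCompIn.subset_of_preconnected (hC : IsCompIn G U C) (hK : (G.induce K).Preconnected)
    (hKU : K ⊆ U) (hne : (K ∩ C).Nonempty) : K ⊆ C :=
  subset_of_induce_preconnected hK hne fun u hu v hv => hC.2.2.2 u hu.2 v (hKU hv)

lemma IsCompIn.eq_of_mem (hC : IsCompIn G U C) (hD : IsCompIn G U D) (hxC : x ∈ C)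
    (hxD : x ∈ D) : C = D :=
  (hD.subset_of_preconnected hC.2.2.1.preconnected hC.2.1 ⟨x, hxC, hxD⟩).antisymm
    (hC.subset_of_preconnected hD.2.2.1.preconnected hD.2.1 ⟨x, hxD, hxC⟩)

lemma isCompIn_supp (hle : G' ≤ G) (c : G'.ConnectedComponent) (hU : c.supp ⊆ U)
    (hadj : ∀ u ∈ c.supp, ∀ v ∈ U, G.Adj u v → G'.Adj u v) : IsCompIn G U c.supp := by
  refine ⟨c.nonempty_supp, hU, c.connected_toSimpleGraph.mono fun u v huv => hle huv, ?_⟩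
  intro u hu v hv huv
  exact c.mem_supp_of_adj_mem_supp hu (hadj u hu v hv huv)

lemma supp_connectedComponentMk_subset (hv : v ∈ K) (hK : ∀ u ∈ K, ∀ w, G.Adj u w → w ∈ K) :
    (G.connectedComponentMk v).supp ⊆ K :=
  subset_of_induce_preconnected (ConnectedComponent.connected_toSimpleGraph _).preconnected
    ⟨v, rfl, hv⟩ fun u hu w _ => hK u hu.2 w

lemma exists_isCompIn (hv : v ∈ U) : ∃ C, IsCompIn G U C ∧ v ∈ C := by
  let G' := (G.induce U).spanningCoe
  have hadj : ∀ {u w}, G'.Adj u w ↔ G.Adj u w ∧ u ∈ U ∧ w ∈ U := by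
    simp [G']
  have hU : (G'.connectedComponentMk v).supp ⊆ U :=
    supp_connectedComponentMk_subset hv fun u _ w huw => (hadj.1 huw).2.2
  exact ⟨_, isCompIn_supp (fun u w huw => (hadj.1 huw).1) _ hU
    fun u hu w hw huw => hadj.2 ⟨huw, hU hu, hw⟩, rfl⟩

lemma IsBranch.exists_adj (hC : IsBranch G S C) (hs : s ∈ S) : ∃ u ∈ C, G.Adj u s := by
  rw [← hC.2] at hs
  exact hs.2

lemma pairwiseDisjoint_isBranch (G : SimpleGraph V) (S : Set V) :
    {C | IsBranch G S C}.PairwiseDisjoint id := by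
  intro C hC D hD hne
  exact Set.disjoint_left.2 fun x hxC hxD => hne (hC.1.eq_of_mem hD.1 hxC hxD)

lemma exists_disjoint_of_ncard_lt {𝓑 : Set (Set V)} (h𝓑 : 𝓑.PairwiseDisjoint id)
    (hZ : Z.Finite) (hlt : Z.ncard < 𝓑.ncard) : ∃ C ∈ 𝓑, Disjoint C Z := by
  by_contra! hmeet
  simp only [Set.not_disjoint_iff] at hmeet
  obtain ⟨C₀, hC₀⟩ := Set.nonempty_of_ncard_ne_zero (Nat.ne_zero_of_lt hlt)
  have : Nonempty V := (hmeet C₀ hC₀).nonempty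
  choose! f hf hfZ using hmeet
  obtain ⟨C, hC, D, hD, hne, heq⟩ := Set.exists_ne_map_eq_of_ncard_lt_of_maps_to hlt hfZ hZ
  exact Set.disjoint_left.1 (h𝓑 hC hD hne) (hf C hC) (heq ▸ hf D hD)

/- The component is that of a branch avoiding `Z`: through this branch it reaches all of `S \ Z`,
and from any vertex of `S \ Z` every other branch avoiding `Z`. -/
lemma exists_isCompOf_of_ncard_lt (hZ : Z.Finite) (hlt : Z.ncard < {C | IsBranch G S C}.ncard)
    (hSZ : ¬ S ⊆ Z) :
    ∃ D, IsCompOf G Z D ∧ S \ Z ⊆ D ∧ ∀ C, IsBranch G S C → Disjoint C Z → C ⊆ D := by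
  obtain ⟨C₀, hC₀ : IsBranch G S C₀, hC₀Z⟩ :=
    exists_disjoint_of_ncard_lt (pairwiseDisjoint_isBranch G S) hZ hlt
  obtain ⟨x, hx⟩ := hC₀.1.1
  obtain ⟨D, hD, hxD⟩ := exists_isCompIn (G := G) (hC₀Z.subset_compl_right hx)
  have hbranch : ∀ {C}, IsBranch G S C → Disjoint C Z → (C ∩ D).Nonempty → C ⊆ D :=
    fun hC hCZ => hD.subset_of_preconnected hC.1.2.2.1.preconnected hCZ.subset_compl_right
  have hSD : S \ Z ⊆ D := by
    rintro s ⟨hs, hsZ⟩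
    obtain ⟨u, hu, hus⟩ := hC₀.exists_adj hs
    exact hD.2.2.2 u (hbranch hC₀ hC₀Z ⟨x, hx, hxD⟩ hu) s hsZ hus
  refine ⟨D, hD, hSD, fun C hC hCZ => hbranch hC hCZ ?_⟩
  obtain ⟨s, hs, hsZ⟩ := Set.not_subset.1 hSZ
  obtain ⟨u, hu, hus⟩ := hC.exists_adj hs
  exact ⟨u, hu, hD.2.2.2 s (hSD ⟨hs, hsZ⟩) u (hCZ.subset_compl_right hu) hus.symm⟩

lemma IsBottleneck.mono {k w : ℕ} (hwk : w ≤ k) (hS : IsBottleneck G k S) :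
    IsBottleneck G w S :=
  ⟨hS.1, le_trans (by omega) hS.2⟩

end Components

/-! ### Schedules -/

/-- A timed description of a path decomposition: the vertex `v` is present during the half-open
interval `[start v, finish v)` of a linear order `T`. -/
structure Schedule (V T : Type*) where
  /-- The time at which a vertex enters. -/
  start : V → T
  /-- The time at which a vertex has left. -/
  finish : V → T

namespace Schedule

variable {T : Type*} [LinearOrder T]

/-- The vertices present at time `t`. -/
def bag (P : Schedule V T) (t : T) : Set V := {v | P.start v ≤ t ∧ t < P.finish v}

/-- The vertices that have started, but not finished, within the initial segment `L` of the time
axis. The bag at time `t` is the case `L = Iic t`, the bag just before time `t` the case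
`L = Iio t`. -/
def crossing (P : Schedule V T) (L : LowerSet T) : Set V := {v | P.start v ∈ L ∧ P.finish v ∉ L}

/-- The schedule encodes an `I`-connected path decomposition of `G` with bags of size at most `w`
in which vertices enter one at a time. As the first vertex of a component of a prefix has no
neighbor that starts earlier, `I`-connectedness is the local condition `exists_adj_start_lt`; as
the bags are largest when a vertex enters, only those are bounded. -/
structure IsLayout (P : Schedule V T) (G : SimpleGraph V) (I : Set V) (w : ℕ) : Prop where
  start_injective : Function.Injective P.start
  start_lt_finish : ∀ v, P.start v < P.finish v
  start_lt_finish_of_adj : ∀ u v, G.Adj u v → P.start u < P.finish v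
  exists_adj_start_lt : ∀ v ∉ I, ∃ u, G.Adj v u ∧ P.start u < P.start v
  ncard_bag_start_le : ∀ v, (P.bag (P.start v)).ncard ≤ w

/-- The interval of `u` contains the interval of `v`. -/
def Covers (P : Schedule V T) (u v : V) : Prop := P.start u ≤ P.start v ∧ P.finish v ≤ P.finish u

/-- The in-branches of `S` in terms of vertex intervals: every vertex of `S` covers every vertex
of the branch. -/
def IsNested (P : Schedule V T) (G : SimpleGraph V) (S C : Set V) : Prop :=
  IsBranch G S C ∧ ∀ s ∈ S, ∀ v ∈ C, P.Covers s v

/-- The union of the in-branches of `S`. -/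
def core (P : Schedule V T) (G : SimpleGraph V) (S : Set V) : Set V :=
  {v | ∃ C, P.IsNested G S C ∧ v ∈ C}

/-- The vertex `v` neither starts nor finishes strictly between the first start and the last finish
of a vertex of `U`. -/
def Waits (P : Schedule V T) (U : Set V) (v : V) : Prop :=
  ∀ h₁ ∈ U, ∀ h₂ ∈ U, P.start v ∉ Set.Ioo (P.start h₁) (P.finish h₂) ∧
    P.finish v ∉ Set.Ioo (P.start h₁) (P.finish h₂)

/-- Being `S`-structured in terms of vertex intervals. -/
def Structured (P : Schedule V T) (G : SimpleGraph V) (S : Set V) : Prop :=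
  ∀ v ∉ S, v ∉ P.core G S → P.Waits (P.core G S) v

variable {P : Schedule V T} {G : SimpleGraph V} {I S S' C D : Set V} {w : ℕ} {s u v h : V} {t : T}

lemma Covers.trans (hus : P.Covers u s) (hsv : P.Covers s v) : P.Covers u v :=
  ⟨hus.1.trans hsv.1, hsv.2.trans hus.2⟩

lemma Covers.mem_bag (hus : P.Covers u s) (hs : s ∈ P.bag t) : u ∈ P.bag t :=
  ⟨hus.1.trans hs.1, hs.2.trans_le hus.2⟩

lemma covers_of_mem_core (hs : s ∈ S) (hv : v ∈ P.core G S) : P.Covers s v := by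
  obtain ⟨C, hC, hvC⟩ := hv
  exact hC.2 s hs v hvC

lemma IsNested.subset_core (hC : P.IsNested G S C) : C ⊆ P.core G S := fun _ hv => ⟨C, hC, hv⟩

lemma disjoint_core : Disjoint S (P.core G S) := by
  refine Set.disjoint_right.2 ?_
  rintro v ⟨C, hC, hvC⟩
  exact hC.1.1.2.1 hvC

lemma nbhdSet_core_subset : nbhdSet G (P.core G S) ⊆ S := by
  rintro s ⟨hs, v, ⟨C, hC, hvC⟩, hvs⟩
  by_contra hsS
  exact hs ⟨C, hC, hC.1.1.2.2.2 v hvC s hsS hvs⟩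

lemma isNested_of_mem_core (hC : IsCompOf G S C) (hvC : v ∈ C) (hv : v ∈ P.core G S) :
    P.IsNested G S C := by
  obtain ⟨D, hD, hvD⟩ := hv
  rwa [hC.eq_of_mem hD.1.1 hvC hvD]

lemma core_congr {T' : Type*} [LinearOrder T'] {Q : Schedule V T'}
    (hPQ : ∀ C, IsBranch G S C → (Q.IsNested G S C ↔ P.IsNested G S C)) :
    Q.core G S = P.core G S := by
  ext v
  exact exists_congr fun C => and_congr_left fun _ =>
    ⟨fun hC => (hPQ C hC.1).1 hC, fun hC => (hPQ C hC.1).2 hC⟩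

lemma IsLayout.start_mem_bag (hP : P.IsLayout G I w) (v : V) : v ∈ P.bag (P.start v) :=
  ⟨le_rfl, hP.start_lt_finish v⟩

lemma IsLayout.subset_bag_start (hP : P.IsLayout G I w) (hh : h ∈ P.core G S) :
    S ⊆ P.bag (P.start h) := fun _ hs =>
  (covers_of_mem_core hs hh).mem_bag (hP.start_mem_bag h)

lemma IsLayout.inter_crossing_nonempty (hP : P.IsLayout G I w) (hC : (G.induce C).Preconnected)
    {L : LowerSet T} (hu : u ∈ C) (huL : P.start u ∈ L) (hv : v ∈ C) (hvL : P.finish v ∉ L) :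
    (C ∩ P.crossing L).Nonempty := by
  by_contra hempty
  have hfinish : ∀ x ∈ C, P.start x ∈ L → P.finish x ∈ L := fun x hx hxL =>
    by_contra fun hxL' => hempty ⟨x, hx, hxL, hxL'⟩
  have hstart : C ⊆ {x | P.start x ∈ L} :=
    subset_of_induce_preconnected hC ⟨u, hu, huL⟩ fun x hx y _ hxy =>
      L.lower (hP.start_lt_finish_of_adj y x hxy.symm).le (hfinish x hx.1 hx.2)
  exact hvL (hfinish v hv (hstart hv))

/- Helly property of intervals: all vertices of `A` share the bag of the last start. -/
lemma IsLayout.ncard_le_of_overlap [Finite V] (hP : P.IsLayout G I w) {A : Set V}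
    (hA : ∀ u ∈ A, ∀ v ∈ A, P.start u < P.finish v) : A.ncard ≤ w := by
  rcases A.eq_empty_or_nonempty with rfl | hne
  · simp
  obtain ⟨v, hv, hmax⟩ := Set.exists_max_image A P.start A.toFinite hne
  have hsub : A ⊆ P.bag (P.start v) := fun u hu => ⟨hmax u hu, hA v hv u hu⟩
  exact (Set.ncard_le_ncard hsub).trans (hP.ncard_bag_start_le v)

lemma IsLayout.ncard_bag_le [Finite V] (hP : P.IsLayout G I w) (t : T) : (P.bag t).ncard ≤ w :=
  hP.ncard_le_of_overlap fun _ hu _ hv => hu.1.trans_lt hv.2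

lemma IsLayout.ncard_crossing_le [Finite V] (hP : P.IsLayout G I w) (L : LowerSet T) :
    (P.crossing L).ncard ≤ w :=
  hP.ncard_le_of_overlap fun _ hu _ hv => lt_of_not_ge fun hle => hv.2 (L.lower hle hu.1)

/- A branch that is not nested meets the bag in which the last vertex of `S` enters or the bag
from which the first vertex of `S` is about to leave; at most `2 * w` branches do so. -/
lemma IsLayout.exists_isNested [Finite V] (hP : P.IsLayout G I w) (hS : IsBottleneck G w S) :
    ∃ C, P.IsNested G S C := by
  obtain ⟨s₀, hs₀, hmax⟩ := Set.exists_max_image S P.start S.toFinite hS.1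
  obtain ⟨s₁, hs₁, hmin⟩ := Set.exists_min_image S P.finish S.toFinite hS.1
  set A := P.crossing (.Iic (P.start s₀))
  set B := P.crossing (.Iio (P.finish s₁))
  have hcard : (A ∪ B).ncard < {C | IsBranch G S C}.ncard := by
    have hunion := Set.ncard_union_le A B
    have hA : A.ncard ≤ w := hP.ncard_crossing_le _
    have hB : B.ncard ≤ w := hP.ncard_crossing_le _
    have := hS.2
    omega
  obtain ⟨C, hC : IsBranch G S C, hdisj⟩ :=
    exists_disjoint_of_ncard_lt (pairwiseDisjoint_isBranch G S) (A ∪ B).toFinite hcard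
  rw [Set.disjoint_union_right] at hdisj
  refine ⟨C, hC, fun s hs v hv => ⟨?_, ?_⟩⟩
  · by_contra! hlt
    obtain ⟨u, hu, hus⟩ := hC.exists_adj hs₀
    refine Set.not_disjoint_iff_nonempty_inter.2 ?_ hdisj.1
    exact hP.inter_crossing_nonempty hC.1.2.2.1.preconnected hv (hlt.le.trans (hmax s hs)) hu
      (not_le.2 (hP.start_lt_finish_of_adj s₀ u hus.symm))
  · by_contra! hlt
    obtain ⟨u, hu, hus⟩ := hC.exists_adj hs₁
    refine Set.not_disjoint_iff_nonempty_inter.2 ?_ hdisj.2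
    exact hP.inter_crossing_nonempty hC.1.2.2.1.preconnected hu
      (hP.start_lt_finish_of_adj u s₁ hus) hv (not_lt.2 ((hmin s hs).trans hlt.le))

lemma IsLayout.core_nonempty [Finite V] (hP : P.IsLayout G I w) (hS : IsBottleneck G w S) :
    (P.core G S).Nonempty := by
  obtain ⟨C, hC⟩ := hP.exists_isNested hS
  exact hC.1.1.1.mono hC.subset_core

lemma IsLayout.exists_isCompOf [Finite V] (hP : P.IsLayout G I w) (hS : IsBottleneck G w S)
    (hS' : IsBottleneck G w S') (hnot : ¬ S' ⊆ S) :
    ∃ D, IsCompOf G S D ∧ S' \ S ⊆ D ∧ ∀ C, IsBranch G S' C → Disjoint C S → C ⊆ D := by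
  obtain ⟨h, hh⟩ := hP.core_nonempty hS
  have hcard : S.ncard ≤ w :=
    (Set.ncard_le_ncard (hP.subset_bag_start hh)).trans (hP.ncard_bag_start_le h)
  have := hS'.2
  exact exists_isCompOf_of_ncard_lt S.toFinite (by omega) hnot

/-! ### Gathering a vertex set at one moment -/

section Gather

variable {H U : Set V} {h₀ h₁ h₂ : V} {x y z : T}

open Classical in
/-- The new time of an event of the vertex `v` at time `x` when everything outside `H` is halted
at time `t` and all events of `H` are moved to that moment. The first coordinate is the phase:
before the halt, during it, or after it. -/
noncomputable def shift (H : Set V) (t : T) (v : V) (x : T) : ℕ ×ₗ T :=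
  toLex (if v ∈ H then 1 else if x ≤ t then 0 else 2, x)

/-- The schedule in which all of `H` takes place while the rest is halted at time `t`. -/
noncomputable def gather (P : Schedule V T) (H : Set V) (t : T) : Schedule V (ℕ ×ₗ T) where
  start v := shift H t v (P.start v)
  finish v := shift H t v (P.finish v)

lemma shift_lt_shift_iff (huv : u ∈ H ↔ v ∈ H) : shift H t u x < shift H t v y ↔ x < y := by
  simp only [shift, Prod.Lex.toLex_lt_toLex]
  grind

lemma shift_le_shift_iff (huv : u ∈ H ↔ v ∈ H) : shift H t u x ≤ shift H t v y ↔ x ≤ y := by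
  simpa only [not_lt] using (shift_lt_shift_iff (x := y) (y := x) huv.symm).not

lemma shift_lt_of_notMem (hu : u ∉ H) (hv : v ∈ H) :
    shift H t u x < shift H t v y ↔ x ≤ t := by
  simp only [shift, Prod.Lex.toLex_lt_toLex]
  grind

lemma shift_lt_of_mem (hu : u ∈ H) (hv : v ∉ H) :
    shift H t u x < shift H t v y ↔ t < y := by
  simp only [shift, Prod.Lex.toLex_lt_toLex]
  grind

lemma shift_le_of_notMem (hu : u ∉ H) (hv : v ∈ H) :
    shift H t u x ≤ shift H t v y ↔ x ≤ t := by
  simpa only [not_lt] using (shift_lt_of_mem (x := y) (y := x) hv hu).not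

lemma shift_le_of_mem (hu : u ∈ H) (hv : v ∉ H) :
    shift H t u x ≤ shift H t v y ↔ t < y := by
  simpa only [not_lt, not_le] using (shift_lt_of_notMem (x := y) (y := x) hv hu).not

lemma bag_gather_start_of_mem (hv : v ∈ H) :
    (P.gather H t).bag ((P.gather H t).start v) =
      (P.bag t \ H) ∪ (P.bag (P.start v) ∩ H) := by
  ext u
  by_cases hu : u ∈ H
  · simp [bag, gather, hu, shift_le_shift_iff, shift_lt_shift_iff, hv]
  · simp [bag, gather, hu, shift_le_of_notMem hu hv, shift_lt_of_mem hv hu]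

lemma bag_gather_start_subset_of_notMem (hv : v ∉ H) :
    (P.gather H t).bag ((P.gather H t).start v) ⊆ P.bag (P.start v) := by
  rintro u ⟨hle, hlt⟩
  by_cases hu : u ∈ H
  · exact absurd ((shift_lt_of_notMem hv hu).1 hlt) (not_le.2 ((shift_le_of_mem hu hv).1 hle))
  · have huv := iff_of_false hu hv
    exact ⟨(shift_le_shift_iff huv).1 hle, (shift_lt_shift_iff huv.symm).1 hlt⟩

lemma ncard_bag_gather_start_le [Finite V]
    (hmin : ∀ h ∈ H, (P.bag t \ H).ncard ≤ (P.bag (P.start h) \ H).ncard) (v : V) :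
    ((P.gather H t).bag ((P.gather H t).start v)).ncard ≤ (P.bag (P.start v)).ncard := by
  by_cases hv : v ∈ H
  · rw [bag_gather_start_of_mem hv,
      ← Set.ncard_inter_add_ncard_sdiff_eq_ncard (P.bag (P.start v)) H, add_comm]
    exact (Set.ncard_union_le _ _).trans (Nat.add_le_add_right (hmin v hv) _)
  · exact Set.ncard_le_ncard (bag_gather_start_subset_of_notMem hv)

lemma gather_start_injective (hP : Function.Injective P.start) :
    Function.Injective (P.gather H t).start := fun _ _ huv =>
  hP (congrArg (fun x => (ofLex x).2) huv)

/- Connectedness survives because the boundary of `H` has started by time `t`, and before `H`. -/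
lemma IsLayout.gather [Finite V] (hP : P.IsLayout G I w)
    (hH : ∀ s ∈ nbhdSet G H, ∀ h ∈ H, P.Covers s h) (ht : nbhdSet G H ⊆ P.bag t)
    (hmin : ∀ h ∈ H, (P.bag t \ H).ncard ≤ (P.bag (P.start h) \ H).ncard) :
    (P.gather H t).IsLayout G I w where
  start_injective := gather_start_injective hP.start_injective
  start_lt_finish v := (shift_lt_shift_iff Iff.rfl).2 (hP.start_lt_finish v)
  start_lt_finish_of_adj u v huv := by
    by_cases hu : u ∈ H <;> by_cases hv : v ∈ H
    · exact (shift_lt_shift_iff (iff_of_true hu hv)).2 (hP.start_lt_finish_of_adj u v huv)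
    · exact (shift_lt_of_mem hu hv).2 (ht ⟨hv, u, hu, huv⟩).2
    · exact (shift_lt_of_notMem hu hv).2 (ht ⟨hu, v, hv, huv.symm⟩).1
    · exact (shift_lt_shift_iff (iff_of_false hu hv)).2 (hP.start_lt_finish_of_adj u v huv)
  exists_adj_start_lt v hvI := by
    obtain ⟨u, hvu, hlt⟩ := hP.exists_adj_start_lt v hvI
    refine ⟨u, hvu, ?_⟩
    by_cases hu : u ∈ H <;> by_cases hv : v ∈ H
    · exact (shift_lt_shift_iff (iff_of_true hu hv)).2 hlt
    · exact absurd hlt (not_lt.2 (hH v ⟨hv, u, hu, hvu.symm⟩ u hu).1)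
    · exact (shift_lt_of_notMem hu hv).2 (ht ⟨hu, v, hv, hvu⟩).1
    · exact (shift_lt_shift_iff (iff_of_false hu hv)).2 hlt
  ncard_bag_start_le v := (ncard_bag_gather_start_le hmin v).trans (hP.ncard_bag_start_le v)

lemma gather_covers_iff (huv : u ∈ H ↔ v ∈ H) : (P.gather H t).Covers u v ↔ P.Covers u v :=
  and_congr (shift_le_shift_iff huv) (shift_le_shift_iff huv.symm)

lemma gather_covers_iff_mem_bag (hu : u ∉ H) (hv : v ∈ H) :
    (P.gather H t).Covers u v ↔ u ∈ P.bag t :=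
  and_congr (shift_le_of_notMem hu hv) (shift_le_of_mem hv hu)

lemma not_gather_covers (hu : u ∈ H) (hv : v ∉ H) (hvt : v ∈ P.bag t) :
    ¬ (P.gather H t).Covers u v := fun h =>
  hvt.1.not_gt ((shift_le_of_mem hu hv).1 h.1)

lemma shift_notMem_Ioo (hv : v ∉ H) (hh₁ : h₁ ∈ H) (hh₂ : h₂ ∈ H) :
    shift H t v x ∉ Set.Ioo (shift H t h₁ y) (shift H t h₂ z) := fun hx =>
  ((shift_lt_of_notMem hv hh₂).1 hx.2).not_gt ((shift_lt_of_mem hh₁ hv).1 hx.1)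

lemma waits_gather_of_notMem (hv : v ∉ H) (hU : U ⊆ H) : (P.gather H t).Waits U v :=
  fun _ hh₁ _ hh₂ => ⟨shift_notMem_Ioo hv (hU hh₁) (hU hh₂), shift_notMem_Ioo hv (hU hh₁) (hU hh₂)⟩

lemma waits_gather_iff (hUv : ∀ h ∈ U, h ∈ H ↔ v ∈ H) :
    (P.gather H t).Waits U v ↔ P.Waits U v := by
  refine forall₂_congr fun h₁ hh₁ => forall₂_congr fun h₂ hh₂ => ?_
  simp only [gather, Set.mem_Ioo, shift_lt_shift_iff (hUv h₁ hh₁),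
    shift_lt_shift_iff (hUv h₂ hh₂).symm]

/- All of `H` takes place at the start of `h₀`, which does not fall into the span of `U`. -/
lemma waits_gather_of_disjoint (hP : Function.Injective P.start) (hh₀ : h₀ ∈ H) (hv : v ∈ H)
    (hU : Disjoint U H) (hwait : P.Waits U h₀) : (P.gather H (P.start h₀)).Waits U v := by
  intro h₁ hh₁ h₂ hh₂
  have hh₁H := Set.disjoint_left.1 hU hh₁
  have hh₂H := Set.disjoint_left.1 hU hh₂
  have hne : P.start h₁ ≠ P.start h₀ := fun heq => hh₁H (hP heq ▸ hh₀)
  have hshift : ∀ x, shift H (P.start h₀) v x ∉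
      Set.Ioo (shift H (P.start h₀) h₁ (P.start h₁)) (shift H (P.start h₀) h₂ (P.finish h₂)) :=
    fun x hx => (hwait h₁ hh₁ h₂ hh₂).1
      ⟨((shift_lt_of_notMem hh₁H hv).1 hx.1).lt_of_ne hne, (shift_lt_of_mem hv hh₂H).1 hx.2⟩
  exact ⟨hshift _, hshift _⟩

/- A vertex of `U` that is present at time `t` covers the moment at which `H` takes place, so
gathering `H` does not enlarge the span of `U`. -/
lemma waits_gather_of_mem_bag (hs : s ∈ U) (hst : s ∈ P.bag t) (hv : v ∉ H)
    (hwait : P.Waits U v) : (P.gather H t).Waits U v := by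
  have hspan : ∀ h₁ ∈ U, ∀ h₂ ∈ U, ∃ g₁ ∈ U, ∃ g₂ ∈ U, ∀ x,
      shift H t v x ∈ Set.Ioo ((P.gather H t).start h₁) ((P.gather H t).finish h₂) →
        x ∈ Set.Ioo (P.start g₁) (P.finish g₂) := by
    intro h₁ hh₁ h₂ hh₂
    obtain ⟨g₁, hg₁, hstart⟩ : ∃ g ∈ U, ∀ x,
        (P.gather H t).start h₁ < shift H t v x → P.start g < x := by
      by_cases h₁H : h₁ ∈ H
      · exact ⟨s, hs, fun x hx => hst.1.trans_lt ((shift_lt_of_mem h₁H hv).1 hx)⟩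
      · exact ⟨h₁, hh₁, fun x hx => (shift_lt_shift_iff (iff_of_false h₁H hv)).1 hx⟩
    obtain ⟨g₂, hg₂, hfinish⟩ : ∃ g ∈ U, ∀ x,
        shift H t v x < (P.gather H t).finish h₂ → x < P.finish g := by
      by_cases h₂H : h₂ ∈ H
      · exact ⟨s, hs, fun x hx => ((shift_lt_of_notMem hv h₂H).1 hx).trans_lt hst.2⟩
      · exact ⟨h₂, hh₂, fun x hx => (shift_lt_shift_iff (iff_of_false hv h₂H)).1 hx⟩
    exact ⟨g₁, hg₁, g₂, hg₂, fun x hx => ⟨hstart x hx.1, hfinish x hx.2⟩⟩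
  intro h₁ hh₁ h₂ hh₂
  obtain ⟨g₁, hg₁, g₂, hg₂, hsub⟩ := hspan h₁ hh₁ h₂ hh₂
  exact ⟨fun hx => (hwait g₁ hg₁ g₂ hg₂).1 (hsub _ hx),
    fun hx => (hwait g₁ hg₁ g₂ hg₂).2 (hsub _ hx)⟩

lemma isNested_gather_iff_of_disjoint (hS : Disjoint S H) (hC : Disjoint C H) :
    (P.gather H t).IsNested G S C ↔ P.IsNested G S C :=
  and_congr_right fun _ => forall₂_congr fun _ hs => forall₂_congr fun _ hv =>
    gather_covers_iff (iff_of_false (Set.disjoint_left.1 hS hs) (Set.disjoint_left.1 hC hv))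

end Gather

/-! ### Gathering a core -/

section GatherCore

variable {h₀ : V}

lemma core_gather_self (ht : S ⊆ P.bag t) :
    (P.gather (P.core G S) t).core G S = P.core G S := by
  refine core_congr fun C hC => ?_
  by_cases hdisj : Disjoint C (P.core G S)
  · exact isNested_gather_iff_of_disjoint disjoint_core hdisj
  obtain ⟨v, hvC, hv⟩ := Set.not_disjoint_iff.1 hdisj
  have hnested := isNested_of_mem_core hC.1 hvC hv
  refine iff_of_true ⟨hC, fun s hs u hu => ?_⟩ hnested
  exact (gather_covers_iff_mem_bag (Set.disjoint_left.1 disjoint_core hs)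
    (hnested.subset_core hu)).2 (ht hs)

lemma structured_gather_self (ht : S ⊆ P.bag t) :
    (P.gather (P.core G S) t).Structured G S := by
  intro v _ hv
  rw [core_gather_self ht] at hv ⊢
  exact waits_gather_of_notMem hv subset_rfl

/- A nested branch of `S'` cannot contain a vertex of `S`, as the latter covers `x`. -/
lemma disjoint_of_isNested_of_mem_core (hP : Function.Injective P.start) {x : V} (hxS' : x ∈ S')
    (hx : x ∈ P.core G S) (hC : P.IsNested G S' C) : Disjoint C S := by
  refine Set.disjoint_left.2 fun s hsC hs => ?_
  have hsx := (covers_of_mem_core hs hx).1.antisymm (hC.2 x hxS' s hsC).1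
  exact Set.disjoint_left.1 disjoint_core hs (hP hsx ▸ hx)

lemma IsLayout.core_gather_of_mem [Finite V] (hP : P.IsLayout G I w)
    (hS : IsBottleneck G w S) (hS' : IsBottleneck G w S') {x : V} (hxS' : x ∈ S')
    (hx : x ∈ P.core G S) (ht : S ⊆ P.bag t) :
    (P.gather (P.core G S) t).core G S' = P.core G S' ∧ P.core G S' ⊆ P.core G S := by
  have hxS : x ∉ S := Set.disjoint_right.1 disjoint_core hx
  obtain ⟨D, hD, hS'D, hbranch⟩ := hP.exists_isCompOf hS hS' fun hsub => hxS (hsub hxS')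
  have hnested := isNested_of_mem_core hD (hS'D ⟨hxS', hxS⟩) hx
  have hdisj := fun {C} (hC : P.IsNested G S' C) =>
    disjoint_of_isNested_of_mem_core hP.start_injective hxS' hx hC
  have hsub : P.core G S' ⊆ P.core G S := by
    rintro v ⟨C, hC, hvC⟩
    exact hnested.subset_core (hbranch C hC.1 (hdisj hC) hvC)
  refine ⟨core_congr fun C hC => ?_, hsub⟩
  by_cases hCS : Disjoint C S
  · refine and_congr_right fun _ => forall₂_congr fun s hs => forall₂_congr fun v hvC => ?_
    have hv := hbranch C hC hCS hvC
    by_cases hsS : s ∈ S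
    · rw [gather_covers_iff_mem_bag (Set.disjoint_left.1 disjoint_core hsS)
        (hnested.subset_core hv)]
      exact iff_of_true (ht hsS) (hnested.2 s hsS v hv)
    · exact gather_covers_iff
        (iff_of_true (hnested.subset_core (hS'D ⟨hs, hsS⟩)) (hnested.subset_core hv))
  · refine iff_of_false (fun hQ => hCS ?_) fun hP' => hCS (hdisj hP')
    exact Set.disjoint_left.2 fun s hsC hs => not_gather_covers hx
      (Set.disjoint_left.1 disjoint_core hs) (ht hs) (hQ.2 x hxS' s hsC)

lemma disjoint_core_of_ssubset (hSS' : S ⊂ S') (hdisj : Disjoint S' (P.core G S))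
    (hC : IsBranch G S' C) : Disjoint C (P.core G S) := by
  rw [Set.disjoint_iff_inter_eq_empty, ← Set.not_nonempty_iff_eq_empty]
  intro hmeet
  have hsub : C ⊆ P.core G S :=
    subset_of_induce_preconnected hC.1.2.2.1.preconnected hmeet fun u hu v hv huv => by
      by_contra hvcore
      exact hC.1.2.1 hv (hSS'.1 (nbhdSet_core_subset (P := P) ⟨hvcore, u, hu.2, huv⟩))
  obtain ⟨s, hs, hsS⟩ := Set.exists_of_ssubset hSS'
  obtain ⟨u, hu, hus⟩ := hC.exists_adj hs
  exact hsS (nbhdSet_core_subset (P := P) ⟨Set.disjoint_left.1 hdisj hs, u, hsub hu, hus⟩)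

lemma IsLayout.disjoint_core_or_exists_isCompOf [Finite V] (hP : P.IsLayout G I w)
    (hS : IsBottleneck G w S) (hS' : IsBottleneck G w S') (hne : S ≠ S')
    (hdisj : Disjoint S' (P.core G S)) :
    (∀ C, IsBranch G S' C → Disjoint C (P.core G S)) ∨
      ∃ D, IsCompOf G S' D ∧ P.core G S ⊆ D ∧ (S ∩ D).Nonempty := by
  by_cases hsub : S ⊆ S'
  · exact .inl fun C hC => disjoint_core_of_ssubset (hsub.ssubset_of_ne hne) hdisj hC
  obtain ⟨D, hD, hSD, hbranch⟩ := hP.exists_isCompOf hS' hS hsub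
  refine .inr ⟨D, hD, ?_, ?_⟩
  · rintro v ⟨C, hC, hvC⟩
    exact hbranch C hC.1 (hdisj.symm.mono_left hC.subset_core) hvC
  · obtain ⟨s, hs, hsS'⟩ := Set.not_subset.1 hsub
    exact ⟨s, hs, hSD ⟨hs, hsS'⟩⟩

lemma isNested_gather_core_iff (hdisj : Disjoint S' (P.core G S)) (ht : S ⊆ P.bag t)
    (hs : s ∈ S) (hsC : s ∈ C) :
    (P.gather (P.core G S) t).IsNested G S' C ↔ P.IsNested G S' C := by
  have hscore : s ∉ P.core G S := Set.disjoint_left.1 disjoint_core hs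
  refine and_congr_right fun _ => forall₂_congr fun s' hs' => ?_
  have hs'core := Set.disjoint_left.1 hdisj hs'
  have hcovers : ∀ {v}, v ∉ P.core G S →
      ((P.gather (P.core G S) t).Covers s' v ↔ P.Covers s' v) :=
    fun hv => gather_covers_iff (iff_of_false hs'core hv)
  refine ⟨fun hQ v hv => ?_, fun hP v hv => ?_⟩ <;> by_cases hvcore : v ∈ P.core G S
  · exact ((hcovers hscore).1 (hQ s hsC)).trans (covers_of_mem_core hs hvcore)
  · exact (hcovers hvcore).1 (hQ v hv)
  · exact (gather_covers_iff_mem_bag hs'core hvcore).2 ((hP s hsC).mem_bag (ht hs))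
  · exact (hcovers hvcore).2 (hP v hv)

lemma IsLayout.core_gather_of_disjoint [Finite V] (hP : P.IsLayout G I w)
    (hS : IsBottleneck G w S) (hS' : IsBottleneck G w S') (hne : S ≠ S')
    (hdisj : Disjoint S' (P.core G S)) (ht : S ⊆ P.bag t) :
    (P.gather (P.core G S) t).core G S' = P.core G S' := by
  refine core_congr fun C hC => ?_
  by_cases hC' : Disjoint C (P.core G S)
  · exact isNested_gather_iff_of_disjoint hdisj hC'
  obtain hbranch | ⟨D, hD, hcore, s, hs, hsD⟩ :=
    hP.disjoint_core_or_exists_isCompOf hS hS' hne hdisj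
  · exact absurd (hbranch C hC) hC'
  obtain ⟨v, hvC, hv⟩ := Set.not_disjoint_iff.1 hC'
  rw [hC.1.eq_of_mem hD hvC (hcore hv)]
  exact isNested_gather_core_iff hdisj ht hs hsD

lemma IsLayout.disjoint_core_or_core_subset [Finite V] (hP : P.IsLayout G I w)
    (hS : IsBottleneck G w S) (hS' : IsBottleneck G w S') (hne : S ≠ S')
    (hdisj : Disjoint S' (P.core G S)) :
    Disjoint (P.core G S') (P.core G S) ∨
      P.core G S ⊆ P.core G S' ∧ (S ∩ P.core G S').Nonempty := by
  obtain hbranch | ⟨D, hD, hcore, hSD⟩ := hP.disjoint_core_or_exists_isCompOf hS hS' hne hdisj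
  · refine .inl (Set.disjoint_left.2 ?_)
    rintro v ⟨C, hC, hvC⟩
    exact Set.disjoint_left.1 (hbranch C hC.1) hvC
  by_cases hnested : P.IsNested G S' D
  · exact .inr ⟨hcore.trans hnested.subset_core,
      hSD.mono (Set.inter_subset_inter_right S hnested.subset_core)⟩
  · exact .inl (Set.disjoint_left.2 fun v hv' hv =>
      hnested (isNested_of_mem_core hD (hcore hv) hv'))

lemma IsLayout.structured_gather_of_ne [Finite V] (hP : P.IsLayout G I w)
    (hS : IsBottleneck G w S) (hS' : IsBottleneck G w S') (hne : S ≠ S')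
    (hh₀ : h₀ ∈ P.core G S) (hstr : P.Structured G S') :
    (P.gather (P.core G S) (P.start h₀)).Structured G S' := by
  have ht := hP.subset_bag_start hh₀
  intro v hvS' hv
  by_cases hdisj : Disjoint S' (P.core G S)
  · rw [hP.core_gather_of_disjoint hS hS' hne hdisj ht] at hv ⊢
    obtain hcore | ⟨hcore, s, hs, hscore⟩ := hP.disjoint_core_or_core_subset hS hS' hne hdisj
    · by_cases hvH : v ∈ P.core G S
      · exact waits_gather_of_disjoint hP.start_injective hh₀ hvH hcore
          (hstr h₀ (Set.disjoint_right.1 hdisj hh₀) (Set.disjoint_right.1 hcore hh₀))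
      · exact (waits_gather_iff fun h hh =>
          iff_of_false (Set.disjoint_left.1 hcore hh) hvH).2 (hstr v hvS' hv)
    · exact waits_gather_of_mem_bag hscore (ht hs) (fun hvH => hv (hcore hvH)) (hstr v hvS' hv)
  · obtain ⟨x, hxS', hx⟩ := Set.not_disjoint_iff.1 hdisj
    obtain ⟨heq, hsub⟩ := hP.core_gather_of_mem hS hS' hxS' hx ht
    rw [heq] at hv ⊢
    by_cases hvH : v ∈ P.core G S
    · exact (waits_gather_iff fun h hh => iff_of_true (hsub hh) hvH).2 (hstr v hvS' hv)
    · exact waits_gather_of_notMem hvH hsub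

end GatherCore

/-! ### Structuring all bottlenecks -/

section Map

variable {R : Type*} [LinearOrder R] {f : T ↪o R}

/-- The schedule with its time axis embedded into another linear order. It serves to return to the
time axis `ℕ`, which gathering leaves. -/
def map (P : Schedule V T) (f : T ↪o R) : Schedule V R := ⟨f ∘ P.start, f ∘ P.finish⟩

lemma isLayout_map : (P.map f).IsLayout G I w ↔ P.IsLayout G I w := by
  have hbag : ∀ v, (P.map f).bag ((P.map f).start v) = P.bag (P.start v) := fun v => by
    simp only [map, bag, Function.comp_apply, OrderEmbedding.le_iff_le, OrderEmbedding.lt_iff_lt]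
  constructor
  · rintro ⟨hinj, hfinish, hadj, hI, hcard⟩
    exact ⟨hinj.of_comp (f := f), by simpa [map] using hfinish, by simpa [map] using hadj,
      by simpa [map] using hI, by simpa [hbag] using hcard⟩
  · rintro ⟨hinj, hfinish, hadj, hI, hcard⟩
    exact ⟨f.injective.comp hinj, by simpa [map] using hfinish, by simpa [map] using hadj,
      by simpa [map] using hI, by simpa [hbag] using hcard⟩

lemma structured_map : (P.map f).Structured G S ↔ P.Structured G S := by
  have hcore : (P.map f).core G S = P.core G S := core_congr fun C _ =>
    and_congr_right fun _ => forall₄_congr fun _ _ _ _ => and_congr f.le_iff_le f.le_iff_le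
  simp only [Structured, hcore]
  simp only [Waits, map, Function.comp_apply, Set.mem_Ioo, OrderEmbedding.lt_iff_lt]

end Map

lemma exists_nat_schedule [Finite V] (P : Schedule V T) :
    ∃ Q : Schedule V ℕ, (∀ G I w, Q.IsLayout G I w ↔ P.IsLayout G I w) ∧
      ∀ G S, Q.Structured G S ↔ P.Structured G S := by
  let E := ↥(Set.range P.start ∪ Set.range P.finish)
  obtain ⟨f⟩ := nonempty_orderEmbedding_of_finite_infinite E ℕ
  let R : Schedule V E :=
    ⟨fun v => ⟨P.start v, .inl ⟨v, rfl⟩⟩, fun v => ⟨P.finish v, .inr ⟨v, rfl⟩⟩⟩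
  exact ⟨R.map f,
    fun _ _ _ => isLayout_map.trans (isLayout_map (P := R) (f := OrderEmbedding.subtype _)).symm,
    fun _ _ => structured_map.trans (structured_map (P := R) (f := OrderEmbedding.subtype _)).symm⟩

/-- The bottlenecks, for bags of size at most `w`, that are not yet structured. This set is the
variant of the induction. -/
def unstructured (P : Schedule V T) (G : SimpleGraph V) (w : ℕ) : Set (Set V) :=
  {S | IsBottleneck G w S ∧ ¬ P.Structured G S}

lemma IsLayout.exists_unstructured_ssubset [Finite V] {P : Schedule V ℕ} (hP : P.IsLayout G I w)
    (hS : S ∈ P.unstructured G w) :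
    ∃ Q : Schedule V ℕ, Q.IsLayout G I w ∧ Q.unstructured G w ⊂ P.unstructured G w := by
  obtain ⟨h₀, hh₀, hmin⟩ := Set.exists_min_image (P.core G S)
    (fun h => (P.bag (P.start h) \ P.core G S).ncard) (Set.toFinite _) (hP.core_nonempty hS.1)
  have hbag := hP.subset_bag_start hh₀
  have hlayout := hP.gather (fun s hs h hh => covers_of_mem_core (nbhdSet_core_subset hs) hh)
    (nbhdSet_core_subset.trans hbag) hmin
  obtain ⟨Q, hQ, hQstr⟩ := exists_nat_schedule (P.gather (P.core G S) (P.start h₀))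
  have hQS : Q.Structured G S := (hQstr G S).2 (structured_gather_self hbag)
  refine ⟨Q, (hQ G I w).2 hlayout, fun S' hS' => ⟨hS'.1, fun hstr => hS'.2 ?_⟩,
    fun hsub => (hsub hS).2 hQS⟩
  obtain rfl | hne := eq_or_ne S S'
  · exact hQS
  · exact (hQstr G S').2 (hP.structured_gather_of_ne hS.1 hS'.1 hne hh₀ hstr)

lemma IsLayout.exists_structured [Finite V] {P : Schedule V ℕ} (hP : P.IsLayout G I w) :
    ∃ Q : Schedule V ℕ, Q.IsLayout G I w ∧ ∀ S, IsBottleneck G w S → Q.Structured G S := by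
  obtain ⟨Q, hQ, hmin⟩ := WellFounded.has_min
    (InvImage.wf (fun Q : Schedule V ℕ => Q.unstructured G w) wellFounded_lt)
    {Q | Q.IsLayout G I w} ⟨P, hP⟩
  refine ⟨Q, hQ, fun S hS => by_contra fun hstr => ?_⟩
  obtain ⟨R, hR, hlt⟩ := IsLayout.exists_unstructured_ssubset hQ ⟨hS, hstr⟩
  exact hmin R hR hlt

end Schedule

/-! ### From path decompositions to schedules -/

section Supp

variable {l : ℕ} {X : ℕ → Set V} {C : Set V}

lemma bddAbove_supp : BddAbove (supp l X C) := ⟨l, fun _ hi => hi.1.le⟩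

lemma firstIdx_mem_supp (hne : (supp l X C).Nonempty) : firstIdx l X C ∈ supp l X C :=
  Nat.sInf_mem hne

lemma lastIdx_mem_supp (hne : (supp l X C).Nonempty) : lastIdx l X C ∈ supp l X C :=
  Nat.sSup_mem hne bddAbove_supp

end Supp

/- Rank the vertices by their distance to `J`, ties being broken arbitrarily. -/
lemma exists_injective_rank [Countable V] {G : SimpleGraph V} {J : Set V}
    (hJ : ∀ v, ∃ u ∈ J, G.Reachable v u) :
    ∃ r : V → ℕ ×ₗ ℕ, Function.Injective r ∧ ∀ v ∉ J, ∃ u, G.Adj v u ∧ r u < r v := by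
  let lengths (v : V) : Set ℕ := {n | ∃ u ∈ J, ∃ p : G.Walk v u, p.length = n}
  obtain ⟨e, he⟩ := exists_injective_nat V
  refine ⟨fun v => toLex (sInf (lengths v), e v), fun u v huv => ?_, fun v hv => ?_⟩
  · exact he (congrArg (fun x => (ofLex x).2) huv)
  obtain ⟨x, hx, ⟨q⟩⟩ := hJ v
  obtain ⟨y, hy, p, hp⟩ := Nat.sInf_mem (s := lengths v) ⟨_, x, hx, q, rfl⟩
  cases p with
  | nil => exact absurd hy hv
  | @cons _ u _ hvu p =>
    have hlt : sInf (lengths u) < sInf (lengths v) := by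
      have hle : sInf (lengths u) ≤ p.length := Nat.sInf_le ⟨y, hy, p, rfl⟩
      rw [Walk.length_cons] at hp
      omega
    exact ⟨u, hvu, Prod.Lex.toLex_lt_toLex.2 (.inl hlt)⟩

namespace Schedule

section Refine

variable {T R : Type*} [LinearOrder T] [LinearOrder R] [OrderBot R] {P : Schedule V T}
  {G : SimpleGraph V} {I : Set V} {w : ℕ} {r : V → R}

/-- The schedule in which vertices starting at the same time are introduced in the order of
their rank `r`. -/
def refine (P : Schedule V T) (r : V → R) : Schedule V (T ×ₗ R) where
  start v := toLex (P.start v, r v)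
  finish v := toLex (P.finish v, ⊥)

lemma bag_refine_start_subset (v : V) :
    (P.refine r).bag ((P.refine r).start v) ⊆ P.bag (P.start v) := by
  rintro u ⟨hle, hlt⟩
  simp only [refine, Prod.Lex.toLex_le_toLex, Prod.Lex.toLex_lt_toLex, not_lt_bot, and_false,
    or_false] at hle hlt
  exact ⟨hle.elim le_of_lt fun h => h.1.le, hlt⟩

lemma isLayout_refine [Finite V] (hr : Function.Injective r) (hfinish : ∀ v, P.start v < P.finish v)
    (hadj : ∀ u v, G.Adj u v → P.start u < P.finish v)
    (hI : ∀ v ∉ I, ∃ u, G.Adj v u ∧ (P.refine r).start u < (P.refine r).start v)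
    (hw : ∀ v, (P.bag (P.start v)).ncard ≤ w) : (P.refine r).IsLayout G I w where
  start_injective _ _ huv := hr (congrArg (fun x => (ofLex x).2) huv)
  start_lt_finish v := Prod.Lex.toLex_lt_toLex.2 (.inl (hfinish v))
  start_lt_finish_of_adj u v huv := Prod.Lex.toLex_lt_toLex.2 (.inl (hadj u v huv))
  exists_adj_start_lt := hI
  ncard_bag_start_le v := (Set.ncard_le_ncard (bag_refine_start_subset v)).trans (hw v)

end Refine

/-- The edges of `G` whose ends start at the same time. Its components are introduced vertex by
vertex when a path decomposition is turned into a layout. -/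
def levelGraph {T : Type*} (P : Schedule V T) (G : SimpleGraph V) : SimpleGraph V where
  Adj u v := G.Adj u v ∧ P.start u = P.start v
  symm := ⟨fun _ _ h => ⟨h.1.symm, h.2.symm⟩⟩
  loopless := ⟨fun _ h => h.1.ne rfl⟩

section OfPathDecomp

variable {G : SimpleGraph V} {I : Set V} {l w i : ℕ} {X : ℕ → Set V} {v : V}

/-- The schedule of a path decomposition: each vertex is present during the interval of the bags
containing it. -/
noncomputable def ofPathDecomp (l : ℕ) (X : ℕ → Set V) : Schedule V ℕ where
  start v := firstIdx l X {v}
  finish v := lastIdx l X {v} + 1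

lemma mem_bag_ofPathDecomp (hP : IsPathDecomp G l X) :
    v ∈ (ofPathDecomp l X).bag i ↔ i < l ∧ v ∈ X i := by
  have hsupp : ∀ {j}, j ∈ supp l X {v} ↔ j < l ∧ v ∈ X j := by simp [supp]
  have hne : (supp l X {v}).Nonempty := by simpa only [Set.Nonempty, hsupp] using hP.1 v
  have hfirst := hsupp.1 (firstIdx_mem_supp hne)
  have hlast := hsupp.1 (lastIdx_mem_supp hne)
  constructor
  · rintro ⟨hle, hlt⟩
    have hle' := Nat.lt_succ_iff.1 hlt
    exact ⟨hle'.trans_lt hlast.1, hP.2.2 _ _ _ hle hle' hlast.1 ⟨hfirst.2, hlast.2⟩⟩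
  · intro hi
    exact ⟨Nat.sInf_le (hsupp.2 hi), Nat.lt_succ_iff.2 (le_csSup bddAbove_supp (hsupp.2 hi))⟩

lemma start_lt_finish_ofPathDecomp (hP : IsPathDecomp G l X) (v : V) :
    (ofPathDecomp l X).start v < (ofPathDecomp l X).finish v := by
  obtain ⟨i, hi⟩ := hP.1 v
  obtain ⟨hle, hlt⟩ := (mem_bag_ofPathDecomp hP).2 hi
  exact hle.trans_lt hlt

lemma mem_start_ofPathDecomp (hP : IsPathDecomp G l X) (v : V) :
    (ofPathDecomp l X).start v < l ∧ v ∈ X ((ofPathDecomp l X).start v) :=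
  (mem_bag_ofPathDecomp hP).1 ⟨le_rfl, start_lt_finish_ofPathDecomp hP v⟩

/- Otherwise the component of `v` among the vertices entering together with `v` would be a
component of a prefix avoiding `I`. -/
lemma exists_reachable_ofPathDecomp (hP : IsPathDecomp G l X) (hIc : IsIConn G l X I)
    (v : V) :
    ∃ u ∈ I ∪ {u | ∃ x, G.Adj u x ∧ (ofPathDecomp l X).start x < (ofPathDecomp l X).start u},
      ((ofPathDecomp l X).levelGraph G).Reachable v u := by
  by_contra! hno
  set P := ofPathDecomp l X
  set c := (P.levelGraph G).connectedComponentMk v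
  have hmem : ∀ u ∈ c.supp,
      u ∉ I ∧ ∀ x, G.Adj u x → P.start u ≤ P.start x := by
    intro u hu
    have hu' := fun h => hno u h (ConnectedComponent.exact hu).symm
    exact ⟨fun huI => hu' (.inl huI), fun x hux => not_lt.1 fun hlt => hu' (.inr ⟨x, hux, hlt⟩)⟩
  have hlevel : c.supp ⊆ {u | P.start u = P.start v} :=
    supp_connectedComponentMk_subset rfl fun u hu x hux => hux.2.symm.trans hu
  have hcomp : IsCompIn G {u | ∃ j ≤ P.start v, u ∈ X j} c.supp := by
    refine isCompIn_supp (G' := P.levelGraph G) (fun u x hux => hux.1) c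
      (fun u hu => ⟨_, (hlevel hu).le, (mem_start_ofPathDecomp hP u).2⟩) ?_
    rintro u hu x ⟨j, hj, hxj⟩ hux
    have hxj' : x ∈ P.bag j :=
      (mem_bag_ofPathDecomp hP).2 ⟨hj.trans_lt (mem_start_ofPathDecomp hP v).1, hxj⟩
    refine ⟨hux, ((hmem u hu).2 x hux).antisymm ?_⟩
    exact (hxj'.1.trans hj).trans (hlevel hu).ge
  obtain ⟨u, hu, huI⟩ := hIc _ (mem_start_ofPathDecomp hP v).1 _ hcomp
  exact (hmem u hu).1 huI

lemma exists_isLayout [Finite V] (hP : IsPathDecomp G l X) (hIc : IsIConn G l X I)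
    (hw : ∀ i < l, (X i).ncard ≤ w) : ∃ P : Schedule V ℕ, P.IsLayout G I w := by
  set P := ofPathDecomp l X
  obtain ⟨r, hr, hdesc⟩ := exists_injective_rank (exists_reachable_ofPathDecomp hP hIc)
  have hlayout : (P.refine r).IsLayout G I w := by
    refine isLayout_refine hr (start_lt_finish_ofPathDecomp hP) (fun u v huv => ?_)
      (fun v hv => ?_) fun v => ?_
    · obtain ⟨i, hi, hu, hv⟩ := hP.2.1 u v huv
      exact ((mem_bag_ofPathDecomp hP).2 ⟨hi, hu⟩).1.trans_lt
        ((mem_bag_ofPathDecomp hP).2 ⟨hi, hv⟩).2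
    · by_cases hlower : ∃ u, G.Adj v u ∧ P.start u < P.start v
      · obtain ⟨u, hvu, hlt⟩ := hlower
        exact ⟨u, hvu, Prod.Lex.toLex_lt_toLex.2 (.inl hlt)⟩
      · obtain ⟨u, hvu, hlt⟩ := hdesc v (not_or.2 ⟨hv, hlower⟩)
        exact ⟨u, hvu.1, Prod.Lex.toLex_lt_toLex.2 (.inr ⟨hvu.2.symm, hlt⟩)⟩
    · exact (Set.ncard_le_ncard fun u hu => ((mem_bag_ofPathDecomp hP).1 hu).2).trans
        (hw _ (mem_start_ofPathDecomp hP v).1)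
  obtain ⟨Q, hQ, -⟩ := exists_nat_schedule (P.refine r)
  exact ⟨Q, (hQ G I w).2 hlayout⟩

end OfPathDecomp

/-! ### From schedules to path decompositions -/

section ToPathDecomp

variable {P : Schedule V ℕ} {G : SimpleGraph V} {I S C : Set V} {l w : ℕ} {v : V}

lemma IsLayout.isPathDecomp (hP : P.IsLayout G I w) (hl : ∀ v, P.finish v ≤ l) :
    IsPathDecomp G l P.bag := by
  refine ⟨fun v => ⟨P.start v, (hP.start_lt_finish v).trans_le (hl v), hP.start_mem_bag v⟩, ?_, ?_⟩
  · intro u v huv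
    have hu := hP.start_lt_finish u
    have hv := hP.start_lt_finish v
    have huv' := hP.start_lt_finish_of_adj u v huv
    have hvu' := hP.start_lt_finish_of_adj v u huv.symm
    exact ⟨max (P.start u) (P.start v), (max_lt hu hvu').trans_le (hl u),
      ⟨le_max_left _ _, max_lt hu hvu'⟩, le_max_right _ _, max_lt huv' hv⟩
  · rintro i j m hij hjm - v ⟨hi, hm⟩
    exact ⟨hi.1.trans hij, hjm.trans_lt hm.2⟩

lemma IsLayout.isIConn [Finite V] (hP : P.IsLayout G I w) : IsIConn G l P.bag I := by
  intro i _ C hC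
  obtain ⟨v, hv, hmin⟩ := Set.exists_min_image C P.start C.toFinite hC.1
  refine ⟨v, hv, by_contra fun hvI => ?_⟩
  obtain ⟨u, hvu, hlt⟩ := hP.exists_adj_start_lt v hvI
  obtain ⟨j, hj, hvj⟩ := hC.2.1 hv
  have hu : u ∈ C :=
    hC.2.2.2 v hv u ⟨_, (hlt.le.trans hvj.1).trans hj, hP.start_mem_bag u⟩ hvu
  exact hlt.not_ge (hmin u hu)

lemma IsLayout.isLeast_firstIdx (hP : P.IsLayout G I w) (hl : ∀ v, P.finish v ≤ l)
    (hC : C.Nonempty) : IsLeast (P.start '' C) (firstIdx l P.bag C) := by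
  have hstart : ∀ v ∈ C, P.start v ∈ supp l P.bag C := fun v hv =>
    ⟨(hP.start_lt_finish v).trans_le (hl v), v, hv, hP.start_mem_bag v⟩
  have hle : ∀ v ∈ C, firstIdx l P.bag C ≤ P.start v := fun v hv => Nat.sInf_le (hstart v hv)
  obtain ⟨x, hx⟩ := hC
  obtain ⟨-, v, hv, hvle, -⟩ := firstIdx_mem_supp ⟨_, hstart x hx⟩
  exact ⟨⟨v, hv, hvle.antisymm (hle v hv)⟩, Set.forall_mem_image.2 hle⟩

lemma IsLayout.isGreatest_lastIdx (hP : P.IsLayout G I w) (hl : ∀ v, P.finish v ≤ l)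
    (hC : C.Nonempty) : IsGreatest (P.finish '' C) (lastIdx l P.bag C + 1) := by
  have hfinish : ∀ v ∈ C, P.finish v - 1 ∈ supp l P.bag C := fun v hv => by
    have hlt := hP.start_lt_finish v
    have hle := hl v
    exact ⟨by omega, v, hv, by omega, by omega⟩
  have hle : ∀ v ∈ C, P.finish v ≤ lastIdx l P.bag C + 1 := fun v hv =>
    Nat.sub_le_iff_le_add.1 (le_csSup bddAbove_supp (hfinish v hv))
  obtain ⟨x, hx⟩ := hC
  obtain ⟨-, v, hv, -, hlt⟩ := lastIdx_mem_supp ⟨_, hfinish x hx⟩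
  exact ⟨⟨v, hv, (hle v hv).antisymm hlt⟩, Set.forall_mem_image.2 hle⟩

lemma IsLayout.isInBranch_iff (hP : P.IsLayout G I w) (hl : ∀ v, P.finish v ≤ l) :
    IsInBranch G l P.bag S C ↔ P.IsNested G S C := by
  refine and_congr_right fun hC => ?_
  obtain ⟨⟨u, hu, hufirst⟩, hfirst⟩ := hP.isLeast_firstIdx hl hC.1.1
  obtain ⟨⟨v, hv, hvlast⟩, hlast⟩ := hP.isGreatest_lastIdx hl hC.1.1
  constructor
  · rintro ⟨hSfirst, hSlast⟩ s hs x hx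
    exact ⟨(hSfirst hs).1.trans (hfirst ⟨x, hx, rfl⟩), (hlast ⟨x, hx, rfl⟩).trans (hSlast hs).2⟩
  · refine fun hcov => ⟨fun s hs => ?_, fun s hs => ?_⟩
    · rw [← hufirst]
      exact (hcov s hs u hu).mem_bag (hP.start_mem_bag u)
    · have hlt := hP.start_lt_finish v
      exact (hcov s hs v hv).mem_bag ⟨by omega, by omega⟩

lemma IsLayout.botStart_mem (hP : P.IsLayout G I w) (hl : ∀ v, P.finish v ≤ l)
    (hC : P.IsNested G S C) : botStart G l P.bag S ∈ P.start '' P.core G S := by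
  let starts : Set ℕ := {i | ∃ D, IsInBranch G l P.bag S D ∧ i = firstIdx l P.bag D}
  obtain ⟨D, hD, heq⟩ := Nat.sInf_mem (s := starts) ⟨_, C, (hP.isInBranch_iff hl).2 hC, rfl⟩
  rw [botStart, heq]
  exact Set.image_mono ((hP.isInBranch_iff hl).1 hD).subset_core
    (hP.isLeast_firstIdx hl hD.1.1.1).1

lemma IsLayout.botEnd_succ_mem (hP : P.IsLayout G I w) (hl : ∀ v, P.finish v ≤ l)
    (hC : P.IsNested G S C) : botEnd G l P.bag S + 1 ∈ P.finish '' P.core G S := by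
  let ends : Set ℕ := {i | ∃ D, IsInBranch G l P.bag S D ∧ i = lastIdx l P.bag D}
  have hbdd : BddAbove ends := by
    refine ⟨l, ?_⟩
    rintro _ ⟨D, hD, rfl⟩
    obtain ⟨⟨v, -, hv⟩, -⟩ := hP.isGreatest_lastIdx hl hD.1.1.1
    exact (Nat.le_succ _).trans (hv.ge.trans (hl v))
  obtain ⟨D, hD, heq⟩ := Nat.sSup_mem (s := ends) ⟨_, C, (hP.isInBranch_iff hl).2 hC, rfl⟩ hbdd
  rw [botEnd, heq]
  exact Set.image_mono ((hP.isInBranch_iff hl).1 hD).subset_core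
    (hP.isGreatest_lastIdx hl hD.1.1.1).1

lemma IsLayout.isStructured [Finite V] (hP : P.IsLayout G I w) (hl : ∀ v, P.finish v ≤ l)
    (hS : IsBottleneck G w S) (hstr : P.Structured G S) : IsStructured G l P.bag S := by
  intro C hC
  obtain ⟨hcomp, hnot⟩ : IsCompOf G S C ∧ ¬ P.IsNested G S C := by
    rw [← hP.isInBranch_iff hl]
    rcases hC with h | h | h
    exacts [⟨h.1, fun hin => h.2 hin.1⟩, ⟨h.1.1, h.2.1⟩, ⟨h.1.1, h.2.1⟩]
  obtain ⟨D, hD⟩ := hP.exists_isNested hS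
  obtain ⟨h₁, hh₁, hstart⟩ := hP.botStart_mem hl hD
  obtain ⟨h₂, hh₂, hend⟩ := hP.botEnd_succ_mem hl hD
  intro t ht₁ ht₂
  ext v
  refine and_congr_right fun hv => ?_
  have hcore : v ∉ P.core G S := fun hcore => hnot (isNested_of_mem_core hcomp hv hcore)
  have hwait := hstr v (hcomp.2.1 hv) hcore h₁ hh₁ h₂ hh₂
  simp only [Set.mem_Ioo, bag, Set.mem_ofPred_eq] at hwait ⊢
  omega

end ToPathDecomp

end Schedule

/-- if `G` has an `I`-connected path decomposition of width at most
`k-1`, then it has one of no larger width that is `S`-structured for every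
bottleneck `S`. -/
theorem stmt9 [Fintype V] (k : ℕ) (hk : 1 ≤ k) (G : SimpleGraph V) (I : Set V)
    (l : ℕ) (X : ℕ → Set V) (hP : IsPathDecomp G l X) (hIc : IsIConn G l X I)
    (hw : pdWidth l X ≤ k - 1) :
    ∃ (l' : ℕ) (X' : ℕ → Set V),
      IsPathDecomp G l' X' ∧ IsIConn G l' X' I ∧
      pdWidth l' X' ≤ pdWidth l X ∧
      ∀ S : Set V, IsBottleneck G k S → IsStructured G l' X' S := by
  have hX : ∀ i < l, (X i).ncard ≤ pdWidth l X + 1 := fun i hi =>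
    Nat.sub_le_iff_le_add.1 (Nat.sub_le_sub_right
      (Finset.le_sup (f := fun i => (X i).ncard) (Finset.mem_range.2 hi)) 1)
  obtain ⟨P, hP⟩ := Schedule.exists_isLayout hP hIc hX
  obtain ⟨Q, hQ, hstr⟩ := hP.exists_structured
  obtain ⟨l', hl'⟩ := (Set.finite_range Q.finish).bddAbove
  have hfinish : ∀ v, Q.finish v ≤ l' := fun v => hl' ⟨v, rfl⟩
  refine ⟨l', Q.bag, hQ.isPathDecomp hfinish, hQ.isIConn, ?_, fun S hS => ?_⟩
  · exact Nat.sub_le_iff_le_add.2 (Finset.sup_le fun i _ => hQ.ncard_bag_le i)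
  · have hS' : IsBottleneck G (pdWidth l X + 1) S := hS.mono (by omega)
    exact hQ.isStructured hfinish hS' (hstr S hS')
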